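/- arXiv:1403.0624 — 2 statements merged into one kernel-verified Lean document; each statement's English description precedes it below -/
import Mathlib

section
/- Lemma 4.1 (generic decomposition of bumps): Let J ⊆ ℝ be a bounded interval of positive length and let φ_J : ℝ → ℂ be a smooth function such that for every l, α ∈ ℕ there is a constant A_{l,α} with |φ_J^{(l)}(x)| ≤ A_{l,α} |J|^{−l} (1 + dist(x, J)/|J|)^{−α} for all x ∈ ℝ. Then there exist smooth functions (φ^ℓ_J)_{ℓ ∈ ℕ} with: supp φ^ℓ_J ⊆ 2^ℓ J for every ℓ; φ_J(x) = Σ_{ℓ ∈ ℕ} 2^{−100ℓ} φ^ℓ_J(x) for every x ∈ ℝ; and for every l, α ∈ ℕ a constant A'_{l,α}, depending only on finitely many of the A_{l',α'}, such that |(φ^ℓ_J)^{(l)}(x)| ≤ A'_{l,α} |J|^{−l} (1 + dist(x, J)/|J|)^{−α} for all ℓ ∈ ℕ and x ∈ ℝ. Moreover, if ∫_ℝ φ_J(x) dx = 0, then the φ^ℓ_J can be chosen so that additionally ∫_ℝ φ^ℓ_J(x) dx = 0 for every ℓ ∈ ℕ. -/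
open MeasureTheory Filter Set

/-- The normalized weight `1 + dist(y, [-1/2,1/2])`. -/
noncomputable def bumpWt (y : ℝ) : ℝ := 1 + max 0 (|y| - 1/2)

lemma bumpWt_one_le (y : ℝ) : 1 ≤ bumpWt y := by
  unfold bumpWt; have := le_max_left 0 (|y| - 1/2); linarith

lemma bumpWt_pos (y : ℝ) : 0 < bumpWt y := lt_of_lt_of_le one_pos (bumpWt_one_le y)

lemma abs_le_bumpWt (y : ℝ) : |y| ≤ bumpWt y := by
  unfold bumpWt; have := le_max_right 0 (|y| - 1/2); linarith

lemma bumpWt_eq_one {y : ℝ} (h : |y| ≤ 1/2) : bumpWt y = 1 := by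
  unfold bumpWt; rw [max_eq_left (by linarith)]; norm_num

lemma inv_bumpWt_sq_le (y : ℝ) : (bumpWt y ^ 2)⁻¹ ≤ 2 * (1 + y ^ 2)⁻¹ := by
  have h1 := bumpWt_one_le y
  have h2 := abs_le_bumpWt y
  have h3 : y ^ 2 ≤ bumpWt y ^ 2 := by
    rw [← sq_abs]; gcongr
  have h4 : 1 + y ^ 2 ≤ 2 * bumpWt y ^ 2 := by nlinarith
  have h5 : 0 < bumpWt y := bumpWt_pos y
  rw [← div_eq_mul_inv, le_div_iff₀ (by positivity), inv_mul_eq_div, div_le_iff₀ (by positivity)]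
  exact h4

lemma bumpWt_infDist {a b : ℝ} (h : a < b) (x : ℝ) :
    1 + Metric.infDist x (Set.Icc a b) / (b - a) = bumpWt ((b - a)⁻¹ * (x - (a + b) / 2)) := by
  have hL : 0 < b - a := by linarith
  have key : Metric.infDist x (Set.Icc a b) = max 0 (|x - (a+b)/2| - (b-a)/2) := by
    apply le_antisymm
    · rcases le_total x a with h1 | h1
      · refine (Metric.infDist_le_dist_of_mem (left_mem_Icc.2 h.le)).trans ?_
        refine le_trans ?_ (le_max_right _ _)
        rw [Real.dist_eq, abs_of_nonpos (by linarith), abs_of_nonpos (by linarith)]; linarith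
      rcases le_total x b with h2 | h2
      · rw [Metric.infDist_zero_of_mem (mem_Icc.2 ⟨h1, h2⟩)]; exact le_max_left _ _
      · refine (Metric.infDist_le_dist_of_mem (right_mem_Icc.2 h.le)).trans ?_
        refine le_trans ?_ (le_max_right _ _)
        rw [Real.dist_eq, abs_of_nonneg (by linarith), abs_of_nonneg (by linarith)]; linarith
    · refine max_le Metric.infDist_nonneg ?_
      rw [Metric.le_infDist (nonempty_Icc.2 h.le)]
      intro y hy
      have h1 : |y - (a+b)/2| ≤ (b-a)/2 := abs_le.2 ⟨by linarith [hy.1], by linarith [hy.2]⟩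
      have h2 := abs_sub_le x y ((a+b)/2)
      rw [Real.dist_eq]; linarith
  rw [key, bumpWt, abs_mul, abs_of_pos (inv_pos.2 hL), ← max_div_div_right hL.le]
  congr 2
  · simp
  · field_simp

lemma iteratedDeriv_comp_affine {f : ℝ → ℂ} (hf : ContDiff ℝ (⊤ : ℕ∞) f) (c d : ℝ) (l : ℕ) (x : ℝ) :
    iteratedDeriv l (fun x => f (c * (x - d))) x = c ^ l • iteratedDeriv l f (c * (x - d)) := by
  have h1 := iteratedDeriv_comp_const_smul (n := l) (f := f)
    (hf.of_le (by exact_mod_cast le_top)) c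
  have h2 := iteratedDeriv_comp_sub_const (𝕜 := ℝ) l (fun x => f (c * x)) d
  rw [h2, h1]

lemma bounded_of_cs {f : ℝ → ℂ} (hf : ContDiff ℝ (⊤ : ℕ∞) f) (hc : HasCompactSupport f) (k : ℕ) :
    ∃ M : ℝ, 0 ≤ M ∧ ∀ x, ‖iteratedDeriv k f x‖ ≤ M := by
  have h1 : Continuous (iteratedFDeriv ℝ k f) :=
    hf.continuous_iteratedFDeriv (by exact_mod_cast le_top)
  obtain ⟨M, hM⟩ := (hc.iteratedFDeriv (𝕜 := ℝ) k).exists_bound_of_continuous h1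
  refine ⟨M, (norm_nonneg _).trans (hM 0), fun x => ?_⟩
  rw [← norm_iteratedFDeriv_eq_norm_iteratedDeriv]; exact hM x

lemma exists_cutoffs : ∃ θ ψ : ℝ → ℂ, ContDiff ℝ (⊤ : ℕ∞) θ ∧ ContDiff ℝ (⊤ : ℕ∞) ψ ∧
    (∀ k : ℕ, ∃ D : ℝ, 0 ≤ D ∧ ∀ z, ‖iteratedDeriv k θ z‖ ≤ D * (4 * |z|) ^ 100) ∧
    (∀ z, 1/2 ≤ |z| → θ z = 1) ∧
    (∀ l : ℕ, ∃ S : ℝ, 0 ≤ S ∧ ∀ (α : ℕ) y, ‖iteratedDeriv l ψ y‖ ≤ S * (bumpWt y ^ α)⁻¹) ∧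
    (∀ z, 1/2 ≤ |z| → ψ z = 0) ∧ Integrable ψ ∧ ∫ y, ψ y = 1 := by
  let f : ContDiffBump (0:ℝ) := ⟨1/4, 1/2, by norm_num, by norm_num⟩
  have hη : ContDiff ℝ (⊤ : ℕ∞) (fun z => (f z : ℂ)) :=
    Complex.ofRealCLM.contDiff.comp f.contDiff
  have hψ : ContDiff ℝ (⊤ : ℕ∞) (fun z => (f.normed volume z : ℂ)) :=
    Complex.ofRealCLM.contDiff.comp f.contDiff_normed
  have hηc : HasCompactSupport (fun z => (f z : ℂ)) :=
    f.hasCompactSupport.comp_left (g := fun r : ℝ => (r:ℂ)) (by simp)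
  have hψc : HasCompactSupport (fun z => (f.normed volume z : ℂ)) :=
    f.hasCompactSupport_normed.comp_left (g := fun r : ℝ => (r:ℂ)) (by simp)
  have hz : ∀ z, 1/2 ≤ |z| → f z = 0 := fun z h => f.zero_of_le_dist (by simpa [f] using h)
  have hψz : ∀ z, 1/2 ≤ |z| → (f.normed volume z : ℂ) = 0 := by
    intro z h; rw [f.normed_def, hz z h]; simp
  refine ⟨fun z => 1 - (f z : ℂ), fun z => (f.normed volume z : ℂ), contDiff_const.sub hη, hψ,
    ?_, ?_, ?_, hψz, f.integrable_normed.ofReal, ?_⟩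
  · intro k
    obtain ⟨M, hM0, hM⟩ := bounded_of_cs hη hηc k
    refine ⟨1 + M, by linarith, fun z => ?_⟩
    rcases lt_or_ge |z| (1/4) with h | h
    · have h1 : (fun z => 1 - (f z : ℂ)) =ᶠ[nhds z] fun _ => 0 := by
        filter_upwards [f.eventuallyEq_one_of_mem_ball (x := z) (by simpa [f] using h)] with y hy
        rw [hy]; simp
      rw [h1.iteratedDeriv_eq]
      simp only [iteratedDeriv_fun_const_zero, norm_zero]
      positivity
    · have h1 : (1:ℝ) ≤ (4 * |z|) ^ 100 := one_le_pow₀ (by linarith)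
      have h2 : iteratedDeriv k (fun z => 1 - (f z : ℂ)) z
          = iteratedDeriv k (fun _ : ℝ => (1:ℂ)) z - iteratedDeriv k (fun z => (f z : ℂ)) z :=
        iteratedDeriv_fun_sub contDiffAt_const
          (hη.contDiffAt.of_le (by exact_mod_cast le_top))
      have h3 : ‖iteratedDeriv k (fun _ : ℝ => (1:ℂ)) z‖ ≤ 1 := by
        rw [iteratedDeriv_const]; split_ifs <;> simp
      rw [h2]
      refine (norm_sub_le _ _).trans ?_
      have := hM z
      nlinarith
  · intro z h
    simp [hz z h]
  · intro l
    obtain ⟨M, hM0, hM⟩ := bounded_of_cs hψ hψc l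
    refine ⟨M, hM0, fun α y => ?_⟩
    rcases le_or_gt |y| (1/2) with h | h
    · rw [bumpWt_eq_one h]; simpa using hM y
    · have h1 : (fun z => (f.normed volume z : ℂ)) =ᶠ[nhds y] fun _ => 0 := by
        filter_upwards [continuous_abs.continuousAt.eventually (lt_mem_nhds h)] with t ht
        exact hψz t ht.le
      rw [h1.iteratedDeriv_eq]
      simp only [iteratedDeriv_fun_const_zero, norm_zero]
      have := bumpWt_pos y
      positivity
  · rw [integral_complex_ofReal, f.integral_normed]; simp

lemma integrable_of_bumpWt {f : ℝ → ℂ} (hf : Continuous f) {C : ℝ} (hC : 0 ≤ C)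
    (h : ∀ y, ‖f y‖ ≤ C * (bumpWt y ^ 2)⁻¹) :
    Integrable f ∧ ‖∫ y, f y‖ ≤ C * (2 * Real.pi) := by
  have h1 : ∀ y, ‖f y‖ ≤ C * (2 * (1 + y ^ 2)⁻¹) := fun y =>
    (h y).trans (mul_le_mul_of_nonneg_left (inv_bumpWt_sq_le y) hC)
  have hi : Integrable (fun y : ℝ => C * (2 * (1 + y ^ 2)⁻¹)) :=
    (integrable_inv_one_add_sq.const_mul 2).const_mul C
  refine ⟨hi.mono' hf.aestronglyMeasurable (Eventually.of_forall h1), ?_⟩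
  refine (norm_integral_le_of_norm_le hi (Eventually.of_forall h1)).trans_eq ?_
  rw [integral_const_mul, integral_const_mul, integral_univ_inv_one_add_sq]

lemma normalized_tails (A : ℕ → ℕ → ℝ) : ∃ A' : ℕ → ℕ → ℝ, ∀ g : ℝ → ℂ,
    ContDiff ℝ (⊤ : ℕ∞) g →
    (∀ l α y, ‖iteratedDeriv l g y‖ ≤ A l α * (bumpWt y ^ α)⁻¹) →
    ∃ F : ℕ → ℝ → ℂ, (∀ n, ContDiff ℝ (⊤ : ℕ∞) (F n)) ∧ F 0 = g ∧
      (∀ n y, 2 ^ n / 2 < |y| → F n y = g y) ∧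
      (∀ n y, 2 ^ n / 2 < |y| → F (n + 1) y = g y) ∧
      (∀ l α n y, ‖iteratedDeriv l (F n) y‖ ≤
        A' l α * ((2:ℝ) ^ (100 * n))⁻¹ * (bumpWt y ^ α)⁻¹) ∧
      (∀ n, Integrable (F n)) ∧ ((∫ y, g y) = 0 → ∀ n, (∫ y, F n y) = 0) := by
  obtain ⟨θ, ψ, hθ, hψ, hD, hθ1, hS, hψ0, hψi, hψ1⟩ := exists_cutoffs
  choose D hD0 hD using hD
  choose S hS0 hS using hS
  let B : ℕ → ℕ → ℝ := fun l α => ∑ i ∈ Finset.range (l + 1),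
    (l.choose i : ℝ) * |A i (α + 100)| * (D (l - i) * 4 ^ 100)
  have hB0 : ∀ l α, 0 ≤ B l α := fun l α => Finset.sum_nonneg fun i _ => by
    have := hD0 (l - i); positivity
  refine ⟨fun l α => |A l α| + 2 ^ 100 * (B l α + B 0 2 * (2 * Real.pi) * S l), fun g hg hA => ?_⟩
  let T : ℕ → ℝ → ℂ := fun n y => θ ((2⁻¹ : ℝ) ^ n * y)
  have hT : ∀ n, ContDiff ℝ (⊤ : ℕ∞) (T n) := fun n => hθ.comp (contDiff_const.mul contDiff_id)
  have hTd : ∀ n k y, ‖iteratedDeriv k (T n) y‖ ≤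
      D k * 4 ^ 100 * (((2:ℝ) ^ (100 * n))⁻¹ * bumpWt y ^ 100) := by
    intro n k y
    have h1 := iteratedDeriv_comp_affine hθ ((2⁻¹ : ℝ) ^ n) 0 k y
    simp only [sub_zero] at h1
    change iteratedDeriv k (T n) y = _ at h1
    rw [h1, norm_smul]
    have h2 : ‖((2⁻¹ : ℝ) ^ n) ^ k‖ ≤ 1 := by
      rw [norm_pow, norm_pow]
      exact pow_le_one₀ (by positivity) (pow_le_one₀ (by positivity) (by norm_num))
    refine (mul_le_of_le_one_left (norm_nonneg _) h2).trans ((hD k _).trans ?_)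
    have h3 : (4 * |(2⁻¹ : ℝ) ^ n * y|) ^ 100 ≤ (4 * ((2⁻¹ : ℝ) ^ n * bumpWt y)) ^ 100 := by
      rw [abs_mul, abs_of_pos (by positivity : (0:ℝ) < (2⁻¹ : ℝ) ^ n)]
      have := abs_le_bumpWt y
      gcongr
    refine (mul_le_mul_of_nonneg_left h3 (hD0 k)).trans_eq ?_
    rw [mul_pow, mul_pow, ← pow_mul, inv_pow, mul_comm n 100]
    ring
  let P : ℕ → ℝ → ℂ := fun n y => g y * T n y
  have hP : ∀ n, ContDiff ℝ (⊤ : ℕ∞) (P n) := fun n => hg.mul (hT n)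
  have hPd : ∀ l α n y, ‖iteratedDeriv l (P n) y‖ ≤
      B l α * ((2:ℝ) ^ (100 * n))⁻¹ * (bumpWt y ^ α)⁻¹ := by
    intro l α n y
    have h1 := norm_iteratedFDeriv_mul_le hg (hT n) y (n := l) (by exact_mod_cast le_top)
    simp only [norm_iteratedFDeriv_eq_norm_iteratedDeriv] at h1
    refine h1.trans ?_
    rw [mul_assoc, Finset.sum_mul]
    refine Finset.sum_le_sum fun i _ => ?_
    have hw := bumpWt_pos y
    have h2 : ‖iteratedDeriv i g y‖ ≤ |A i (α + 100)| * (bumpWt y ^ (α + 100))⁻¹ :=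
      (hA i (α + 100) y).trans (by gcongr; exact le_abs_self _)
    have h3 := hTd n (l - i) y
    have h4 := hD0 (l - i)
    calc _ ≤ (l.choose i : ℝ) * (|A i (α + 100)| * (bumpWt y ^ (α + 100))⁻¹) *
          (D (l - i) * 4 ^ 100 * (((2:ℝ) ^ (100 * n))⁻¹ * bumpWt y ^ 100)) := by gcongr
      _ = ((l.choose i : ℝ) * |A i (α + 100)| * (D (l - i) * 4 ^ 100)) *
          (((2:ℝ) ^ (100 * n))⁻¹ * ((bumpWt y ^ (α + 100))⁻¹ * bumpWt y ^ 100)) := by ring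
      _ = _ := by
        congr 2
        rw [pow_add, mul_inv, mul_assoc, inv_mul_cancel₀ (by positivity), mul_one]
  have hPi : ∀ n, Integrable (P n) ∧
      ‖∫ y, P n y‖ ≤ (B 0 2 * ((2:ℝ) ^ (100 * n))⁻¹) * (2 * Real.pi) := fun n =>
    integrable_of_bumpWt (hP n).continuous (by have := hB0 0 2; positivity)
      (fun y => by simpa using hPd 0 2 n y)
  have hgi : Integrable g := (integrable_of_bumpWt (C := |A 0 2|) hg.continuous (abs_nonneg _)
      (fun y => by
        have hw := bumpWt_pos y
        have := hA 0 2 y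
        rw [iteratedDeriv_zero] at this
        exact this.trans (by gcongr; exact le_abs_self _))).1
  let E : ℕ → ℝ → ℂ := fun n y => P n y - (∫ t, P n t) * ψ y
  let F : ℕ → ℝ → ℂ := fun n => Nat.casesOn n g E
  have hE : ∀ n, ContDiff ℝ (⊤ : ℕ∞) (E n) := fun n => (hP n).sub (contDiff_const.mul hψ)
  have hEd : ∀ l α n y, ‖iteratedDeriv l (E n) y‖ ≤
      (B l α + B 0 2 * (2 * Real.pi) * S l) * ((2:ℝ) ^ (100 * n))⁻¹ * (bumpWt y ^ α)⁻¹ := by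
    intro l α n y
    have h1 : iteratedDeriv l (E n) y
        = iteratedDeriv l (P n) y - (∫ t, P n t) * iteratedDeriv l ψ y := by
      have hψl : ContDiffAt ℝ l ψ y := hψ.contDiffAt.of_le (by exact_mod_cast le_top)
      have h0 := iteratedDeriv_fun_sub (n := l) (x := y) (f := P n)
        (g := fun y => (∫ t, P n t) * ψ y)
        ((hP n).contDiffAt.of_le (by exact_mod_cast le_top)) (contDiffAt_const.mul hψl)
      rw [iteratedDeriv_const_mul _ hψl] at h0
      exact h0
    rw [h1]
    refine (norm_sub_le _ _).trans ?_
    rw [norm_mul]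
    have h2 := hPd l α n y
    have h3 := (hPi n).2
    have h4 := hS l α y
    have h5 := mul_le_mul h3 h4 (norm_nonneg _) ((norm_nonneg _).trans h3)
    refine (add_le_add h2 h5).trans_eq ?_
    ring
  have hEg : ∀ n y, 2 ^ n / 2 < |y| → E n y = g y := by
    intro n y h
    have h1 : (1:ℝ) ≤ 2 ^ n := one_le_pow₀ (by norm_num)
    have h2 : ψ y = 0 := hψ0 y (by linarith)
    have h3 : T n y = 1 := hθ1 _ (by
      rw [abs_mul, abs_of_pos (by positivity : (0:ℝ) < (2⁻¹ : ℝ) ^ n), inv_pow, inv_mul_eq_div,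
        le_div_iff₀ (by positivity)]
      linarith)
    simp [E, P, h2, h3]
  have hEi : ∀ n, Integrable (E n) := fun n => (hPi n).1.sub (hψi.const_mul _)
  refine ⟨F, ?_, rfl, ?_, fun n y h => hEg n y h, ?_, ?_, ?_⟩
  · rintro (_ | n)
    exacts [hg, hE n]
  · rintro (_ | n) y h
    · rfl
    · exact hEg n y (lt_of_le_of_lt (by rw [pow_succ]; have : (0:ℝ) < 2 ^ n := by positivity
                                        linarith) h)
  · rintro l α (_ | n) y
    · have hw := bumpWt_pos y
      refine (hA l α y).trans ?_
      have h0 := hB0 l α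
      have h1 := hB0 0 2
      have h2 := hS0 l
      have h3 : 0 ≤ 2 ^ 100 * (B l α + B 0 2 * (2 * Real.pi) * S l) := by positivity
      simp only [mul_zero, pow_zero, inv_one, mul_one]
      gcongr
      linarith [le_abs_self (A l α)]
    · have hw := bumpWt_pos y
      refine (hEd l α n y).trans ?_
      have h3 : ((2:ℝ) ^ (100 * n))⁻¹ = 2 ^ 100 * ((2:ℝ) ^ (100 * (n + 1)))⁻¹ := by
        rw [mul_add, pow_add]; field_simp
      rw [h3, ← mul_assoc]
      gcongr
      linarith [abs_nonneg (A l α)]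
  · rintro (_ | n)
    exacts [hgi, hEi n]
  · rintro h0 (_ | n)
    · exact h0
    · change ∫ y, (P n y - (∫ t, P n t) * ψ y) = 0
      rw [integral_sub (hPi n).1 (hψi.const_mul _), integral_const_mul, hψ1]; simp

/-- **Generic decomposition of bumps (Lemma 4.1).** Every smooth bump `φ_J` adapted to a
bounded interval `J = [a,b]` decomposes as `φ_J = Σ_ℓ 2^{−100ℓ} φ^ℓ_J` where each `φ^ℓ_J`
is a bump adapted to `J` (with constants depending only on those of `φ_J`) supported in
`2^ℓ J`; if `∫ φ_J = 0` the pieces can be chosen with `∫ φ^ℓ_J = 0`. -/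
theorem generic_bump_decomposition :
    ∀ A : ℕ → ℕ → ℝ, ∃ A' : ℕ → ℕ → ℝ,
    ∀ (a b : ℝ), a < b → ∀ φ : ℝ → ℂ, ContDiff ℝ (⊤ : ℕ∞) φ →
    (∀ l α : ℕ, ∀ x : ℝ,
        ‖iteratedDeriv l φ x‖ ≤
          A l α * (b - a) ^ (-(l:ℝ)) *
            (1 + Metric.infDist x (Set.Icc a b) / (b - a)) ^ (-(α:ℝ))) →
    ∃ φℓ : ℕ → ℝ → ℂ,
      (∀ ℓ : ℕ, ContDiff ℝ (⊤ : ℕ∞) (φℓ ℓ)) ∧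
      (∀ ℓ : ℕ, tsupport (φℓ ℓ) ⊆
          Set.Icc ((a+b)/2 - 2^ℓ * (b-a)/2) ((a+b)/2 + 2^ℓ * (b-a)/2)) ∧
      (∀ x : ℝ, HasSum (fun ℓ : ℕ => (2:ℂ)^(-(100 * (ℓ:ℤ))) * φℓ ℓ x) (φ x)) ∧
      (∀ l α : ℕ, ∀ ℓ : ℕ, ∀ x : ℝ,
        ‖iteratedDeriv l (φℓ ℓ) x‖ ≤
          A' l α * (b - a) ^ (-(l:ℝ)) *
            (1 + Metric.infDist x (Set.Icc a b) / (b - a)) ^ (-(α:ℝ))) ∧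
      ((∫ x : ℝ, φ x) = 0 → ∀ ℓ : ℕ, (∫ x : ℝ, φℓ ℓ x) = 0) := by
  intro A
  obtain ⟨A1, hA1⟩ := normalized_tails A
  refine ⟨fun l α => 2 * |A1 l α|, fun a b hab φ hφ hA => ?_⟩
  have hL : 0 < b - a := by linarith
  have hL' : b - a ≠ 0 := hL.ne'
  set m := (a + b) / 2 with hm
  set L := b - a with hLd
  have hwt : ∀ x (α : ℕ), (1 + Metric.infDist x (Set.Icc a b) / L) ^ (-(α:ℝ))
      = (bumpWt (L⁻¹ * (x - m)) ^ α)⁻¹ := by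
    intro x α
    rw [bumpWt_infDist hab, Real.rpow_neg (bumpWt_pos _).le, Real.rpow_natCast]
  have hLp : ∀ l : ℕ, L ^ (-(l:ℝ)) = (L ^ l)⁻¹ := fun l => by
    rw [Real.rpow_neg hL.le, Real.rpow_natCast]
  simp only [hwt, hLp] at hA ⊢
  obtain ⟨F, hF, hF0, hFg, hFg', hFd, hFi, hFz⟩ := hA1 (fun y => φ (L * (y - (-(m / L)))))
    (hφ.comp (contDiff_const.mul (contDiff_id.sub contDiff_const))) (by
      intro l α y
      rw [iteratedDeriv_comp_affine hφ, norm_smul, norm_pow, Real.norm_of_nonneg hL.le]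
      have h1 := hA l α (L * (y - (-(m / L))))
      have h2 : L⁻¹ * (L * (y - (-(m / L))) - m) = y := by field_simp; ring
      rw [h2] at h1
      refine (mul_le_mul_of_nonneg_left h1 (by positivity)).trans_eq ?_
      field_simp)
  let G : ℕ → ℝ → ℂ := fun n y => (2:ℂ) ^ (100 * n) * (F n y - F (n + 1) y)
  have hG : ∀ n, ContDiff ℝ (⊤ : ℕ∞) (G n) := fun n =>
    contDiff_const.mul ((hF n).sub (hF (n + 1)))
  have hGd : ∀ l α n y, ‖iteratedDeriv l (G n) y‖ ≤ 2 * |A1 l α| * (bumpWt y ^ α)⁻¹ := by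
    intro l α n y
    have ha : ∀ k, ContDiffAt ℝ l (F k) y := fun k =>
      (hF k).contDiffAt.of_le (by exact_mod_cast le_top)
    have h0 := iteratedDeriv_const_mul (n := l) (x := y) (f := fun y => F n y - F (n + 1) y)
      ((2:ℂ) ^ (100 * n)) ((ha n).sub (ha (n + 1)))
    rw [iteratedDeriv_fun_sub (ha n) (ha (n + 1))] at h0
    change iteratedDeriv l (G n) y = _ at h0
    rw [h0, norm_mul, norm_pow]
    have hw := bumpWt_pos y
    have h1 : ∀ k, n ≤ k → ‖iteratedDeriv l (F k) y‖ ≤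
        |A1 l α| * ((2:ℝ) ^ (100 * n))⁻¹ * (bumpWt y ^ α)⁻¹ := by
      intro k hk
      refine (hFd l α k y).trans ?_
      gcongr
      · exact le_abs_self _
      · norm_num
    have h2 := (norm_sub_le (iteratedDeriv l (F n) y) (iteratedDeriv l (F (n + 1)) y)).trans
      (add_le_add (h1 n le_rfl) (h1 (n + 1) (Nat.le_succ n)))
    have h3 : ‖(2:ℂ)‖ = 2 := by simp
    rw [h3]
    refine (mul_le_mul_of_nonneg_left h2 (by positivity)).trans_eq ?_
    field_simp
    ring
  refine ⟨fun n x => G n (L⁻¹ * (x - m)), ?_, ?_, ?_, ?_, ?_⟩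
  · intro n
    exact (hG n).comp (contDiff_const.mul (contDiff_id.sub contDiff_const))
  · intro n
    refine closure_minimal (fun x hx => ?_) isClosed_Icc
    by_contra hc
    apply hx
    have h1 : 2 ^ n / 2 < |L⁻¹ * (x - m)| := by
      rw [abs_mul, abs_of_pos (inv_pos.2 hL), inv_mul_eq_div, lt_div_iff₀ hL]
      by_contra hn
      have h2 := abs_le.1 (not_lt.1 hn)
      exact hc ⟨by linarith [h2.1], by linarith [h2.2]⟩
    simp only [G, hFg n _ h1, hFg' n _ h1, sub_self, mul_zero]
  · intro x
    set y := L⁻¹ * (x - m) with hy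
    have hterm : ∀ n : ℕ, (2:ℂ) ^ (-(100 * (n:ℤ))) * G n y = F n y - F (n + 1) y := by
      intro n
      have : (2:ℂ) ^ (-(100 * (n:ℤ))) = ((2:ℂ) ^ (100 * n))⁻¹ := by
        rw [zpow_neg]; norm_cast
      rw [this]
      simp only [G]
      rw [← mul_assoc, inv_mul_cancel₀ (pow_ne_zero _ two_ne_zero), one_mul]
    have hx : φ x = F 0 y := by
      rw [hF0, hy]
      congr 1
      field_simp
      ring
    simp only [← hy, hterm, hx]
    have hb : ∀ n, ‖F n y‖ ≤ |A1 0 0| * ((2:ℝ)⁻¹) ^ n := by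
      intro n
      have h1 := hFd 0 0 n y
      simp only [iteratedDeriv_zero, pow_zero, inv_one, mul_one] at h1
      refine h1.trans ?_
      rw [inv_pow]
      gcongr
      · exact le_abs_self _
      · norm_num
      · omega
    have hs : Summable (fun n => |A1 0 0| * ((2:ℝ)⁻¹) ^ n) :=
      (summable_geometric_of_lt_one (by norm_num) (by norm_num)).mul_left _
    have hsF : Summable (fun n => F n y) := Summable.of_norm_bounded hs hb
    have hsD : Summable (fun n => F n y - F (n + 1) y) :=
      hsF.sub ((summable_nat_add_iff 1).2 hsF)
    rw [hsD.hasSum_iff_tendsto_nat]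
    simp only [Finset.sum_range_sub' (fun n => F n y)]
    simpa using hsF.tendsto_atTop_zero.const_sub (F 0 y)
  · intro l α n x
    rw [iteratedDeriv_comp_affine (hG n), norm_smul, norm_pow,
      Real.norm_of_nonneg (inv_pos.2 hL).le]
    refine (mul_le_mul_of_nonneg_left (hGd l α n _) (by positivity)).trans_eq ?_
    rw [inv_pow]; ring
  · intro h0 n
    have hg0 : ∫ y, φ (L * (y - (-(m / L)))) = 0 := by
      rw [integral_sub_right_eq_self (fun y => φ (L * y)), Measure.integral_comp_mul_left, h0,
        smul_zero]
    have hz := hFz hg0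
    rw [integral_sub_right_eq_self (fun y => G n (L⁻¹ * y)), Measure.integral_comp_mul_left]
    have : ∫ y, G n y = 0 := by
      simp only [G]
      rw [integral_const_mul, integral_sub (hFi n) (hFi (n + 1)), hz, hz]; simp
    rw [this, smul_zero]
end

section
/- Logarithmic blow-up of the bi-parameter kernel integral (inequality (1.6)): There exist constants c > 0 and C ≥ 0 such that for every real N ≥ 100, the iterated principal-value integral A(N) := ∫_{−N/10}^{N/10} (1/t) · ( lim_{δ→0⁺} ∫_{δ<|s|<N/10} e^{2ist} (1/s) ds ) dt satisfies |A(N)| ≥ c · log N − C. (For each t the inner limit exists and equals 2i ∫_{0}^{N/10} sin(2st)/s ds, and the resulting function of t extends to an integrable function on [−N/10, N/10].) -/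
open MeasureTheory Filter Set

/-- the sinc average -/
noncomputable def hh (R t : ℝ) : ℝ := ∫ s in (0:ℝ)..R, Real.sinc (2 * s * t)

lemma hh_cont (R : ℝ) : Continuous (hh R) := by
  unfold hh
  apply intervalIntegral.continuous_parametric_intervalIntegral_of_continuous'
  have := Real.continuous_sinc
  fun_prop

lemma sinc_lower {u : ℝ} (h0 : 0 ≤ u) (h1 : u ≤ 1) : 3/4 ≤ Real.sinc u := by
  rcases h0.eq_or_lt with rfl | h0
  · norm_num [Real.sinc_zero]
  · rw [Real.sinc_of_ne_zero h0.ne', le_div_iff₀ h0]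
    have := Real.sin_gt_sub_cube h0
    nlinarith [mul_pos h0 h0, mul_nonneg h0.le (mul_nonneg (sub_nonneg.2 h1) (by linarith : 0 ≤ 1 + u))]

/-- the sine integral -/
noncomputable def Si (x : ℝ) : ℝ := ∫ u in (0:ℝ)..x, Real.sinc u

lemma Si_deriv (x : ℝ) : HasDerivAt Si (Real.sinc x) x :=
  intervalIntegral.integral_hasDerivAt_right (Real.continuous_sinc.intervalIntegrable _ _)
    (Real.continuous_sinc.stronglyMeasurableAtFilter _ _) Real.continuous_sinc.continuousAt

lemma Si_lower_small {x : ℝ} (h0 : 0 ≤ x) (h1 : x ≤ 1) : 3/4 * x ≤ Si x := by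
  have : ∫ u in (0:ℝ)..x, (3/4:ℝ) ≤ ∫ u in (0:ℝ)..x, Real.sinc u := by
    apply intervalIntegral.integral_mono_on h0 (by simp) (Real.continuous_sinc.intervalIntegrable _ _)
    intro u hu
    exact sinc_lower hu.1 (hu.2.trans h1)
  simp at this
  unfold Si
  linarith

lemma Si_lower {x : ℝ} (h1 : 1 ≤ x) : 1/4 ≤ Si x := by
  have hd : ∀ y : ℝ, 0 < y → HasDerivAt (fun y => Si y - (1 - Real.cos y) / y)
      ((1 - Real.cos y) / y^2) y := by
    intro y hy
    have h2 := (Si_deriv y).sub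
      ((((hasDerivAt_const y (1:ℝ)).sub (Real.hasDerivAt_cos y))).div (hasDerivAt_id y) hy.ne')
    refine HasDerivAt.congr_deriv h2 ?_
    rw [Real.sinc_of_ne_zero hy.ne']
    simp
    field_simp
    ring
  have hm : MonotoneOn (fun y => Si y - (1 - Real.cos y) / y) (Ici 1) := by
    apply monotoneOn_of_deriv_nonneg (convex_Ici 1)
    · intro y hy
      exact (hd y (lt_of_lt_of_le one_pos hy)).continuousAt.continuousWithinAt
    · intro y hy
      rw [interior_Ici] at hy
      exact (hd y (lt_trans one_pos hy)).differentiableAt.differentiableWithinAt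
    · intro y hy
      rw [interior_Ici] at hy
      rw [(hd y (lt_trans one_pos hy)).deriv]
      have := Real.cos_le_one y
      have : 0 ≤ 1 - Real.cos y := by linarith
      positivity
  have h3 := hm (mem_Ici.2 le_rfl) (mem_Ici.2 h1) h1
  simp only [div_one] at h3
  have h4 := Si_lower_small zero_le_one le_rfl
  have h5 := Real.one_sub_sq_div_two_le_cos (x := 1)
  have h6 : 0 ≤ (1 - Real.cos x) / x := by
    have := Real.cos_le_one x
    apply div_nonneg <;> linarith
  linarith

lemma Si_nonneg {x : ℝ} (h0 : 0 ≤ x) : 0 ≤ Si x := by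
  rcases le_total x 1 with h | h
  · have := Si_lower_small h0 h
    linarith
  · have := Si_lower h
    linarith

lemma hh_Si (R t : ℝ) : 2 * t * hh R t = Si (2 * t * R) := by
  have := intervalIntegral.mul_integral_comp_mul_left (f := Real.sinc) (a := 0) (b := R) (2 * t)
  unfold hh Si
  simp only [mul_zero] at this
  rw [← this]
  congr 2
  ext s
  congr 1
  ring

lemma hh_neg (R t : ℝ) : hh R (-t) = hh R t := by
  unfold hh
  congr 1
  ext s
  rw [← Real.sinc_neg]
  congr 1
  ring

lemma hh_nonneg {R : ℝ} (hR : 0 ≤ R) (t : ℝ) : 0 ≤ hh R t := by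
  have key : ∀ t : ℝ, 0 < t → 0 ≤ hh R t := by
    intro t ht
    have h1 := hh_Si R t
    have h2 := Si_nonneg (x := 2 * t * R) (by positivity)
    rw [← h1] at h2
    exact nonneg_of_mul_nonneg_right h2 (by positivity)
  rcases lt_trichotomy t 0 with h | h | h
  · rw [← hh_neg]
    exact key _ (by linarith)
  · subst h
    simp [hh, hR]
  · exact key t h

lemma hh_lower {R t : ℝ} (hR : 1 ≤ R) (ht : 1 ≤ t) : 1/8 * (1 / t) ≤ hh R t := by
  have h1 := hh_Si R t
  have h2 := Si_lower (x := 2 * t * R) (by nlinarith)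
  have ht0 : 0 < t := by linarith
  rw [mul_one_div, div_le_iff₀ ht0]
  linarith

lemma hh_int_lower {R : ℝ} (hR : 1 ≤ R) : 1/8 * Real.log R ≤ ∫ t in Icc (-R) R, hh R t := by
  have h1 : ∫ t in Icc 1 R, hh R t ≤ ∫ t in Icc (-R) R, hh R t := by
    apply setIntegral_mono_set
    · exact (hh_cont R).continuousOn.integrableOn_Icc
    · exact Eventually.of_forall fun t => hh_nonneg (by linarith) t
    · exact (Icc_subset_Icc (by linarith) le_rfl).eventuallyLE
  have h2 : ∫ t in (1:ℝ)..R, 1/8 * (1/t) ≤ ∫ t in (1:ℝ)..R, hh R t := by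
    apply intervalIntegral.integral_mono_on hR _ ((hh_cont R).intervalIntegrable _ _)
    · intro t ht
      exact hh_lower hR ht.1
    · apply ContinuousOn.intervalIntegrable
      rw [uIcc_of_le hR]
      intro t ht
      have : t ≠ 0 := by linarith [ht.1]
      exact ContinuousAt.continuousWithinAt (by fun_prop (disch := assumption))
  rw [intervalIntegral.integral_const_mul, integral_one_div_of_pos one_pos (by linarith), div_one,
    intervalIntegral.integral_of_le hR, ← integral_Icc_eq_integral_Ioc] at h2
  linarith

lemma inner_eq {R δ t : ℝ} (hδ : 0 < δ) (hR : δ < R) :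
    (∫ s in {s : ℝ | δ < |s| ∧ |s| < R},
      Complex.exp (2 * Complex.I * (s:ℂ) * (t:ℂ)) * (1/(s:ℂ)))
    = 4 * Complex.I * t * ((∫ s in δ..R, Real.sinc (2 * s * t) : ℝ) : ℂ) := by
  set f : ℝ → ℂ := fun s => Complex.exp (2 * Complex.I * (s:ℂ) * (t:ℂ)) * (1/(s:ℂ)) with hf
  have hset : {s : ℝ | δ < |s| ∧ |s| < R} = Ioo δ R ∪ Ioo (-R) (-δ) := by
    ext s
    simp only [mem_ofPred_eq, mem_union, mem_Ioo, lt_abs, abs_lt]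
    constructor
    · rintro ⟨h | h, h1, h2⟩
      · exact Or.inl ⟨h, h2⟩
      · exact Or.inr ⟨h1, by linarith⟩
    · rintro (⟨h1, h2⟩ | ⟨h1, h2⟩)
      · exact ⟨Or.inl h1, by linarith, h2⟩
      · exact ⟨Or.inr (by linarith), h1, by linarith⟩
  have hc : ∀ s : ℝ, s ≠ 0 → ContinuousAt f s := by
    intro s hs
    have : (s:ℂ) ≠ 0 := by exact_mod_cast hs
    simp only [hf]
    fun_prop (disch := assumption)
  have hi1 : IntervalIntegrable f volume δ R := by
    apply ContinuousOn.intervalIntegrable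
    rw [uIcc_of_le hR.le]
    intro s hs
    exact (hc s (by linarith [hs.1])).continuousWithinAt
  have hi2 : IntervalIntegrable f volume (-R) (-δ) := by
    apply ContinuousOn.intervalIntegrable
    rw [uIcc_of_le (by linarith)]
    intro s hs
    exact (hc s (by linarith [hs.2])).continuousWithinAt
  have hi3 : IntervalIntegrable (fun s => f (-s)) volume δ R := by
    apply ContinuousOn.intervalIntegrable
    rw [uIcc_of_le hR.le]
    intro s hs
    exact (ContinuousAt.comp (f := fun s : ℝ => -s) (hc (-s) (by linarith [hs.1]))
      continuousAt_neg).continuousWithinAt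
  rw [hset, setIntegral_union]
  · rw [← integral_Ioc_eq_integral_Ioo, ← integral_Ioc_eq_integral_Ioo,
      ← intervalIntegral.integral_of_le hR.le, ← intervalIntegral.integral_of_le (by linarith),
      ← intervalIntegral.integral_comp_neg, ← intervalIntegral.integral_add hi1 hi3,
      ← intervalIntegral.integral_ofReal, ← intervalIntegral.integral_const_mul]
    apply intervalIntegral.integral_congr
    intro s hs
    rw [uIcc_of_le hR.le] at hs
    have hs0 : s ≠ 0 := by linarith [hs.1]
    have hs1 : (s:ℂ) ≠ 0 := by exact_mod_cast hs0
    by_cases ht : t = 0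
    · subst ht
      simp [hf]
    · have ht1 : (t:ℂ) ≠ 0 := by exact_mod_cast ht
      have e1 : 2 * Complex.I * (s:ℂ) * (t:ℂ) = (2 * s * t : ℂ) * Complex.I := by ring
      have e2 : 2 * Complex.I * ((-s : ℝ):ℂ) * (t:ℂ) = -(2 * s * t : ℂ) * Complex.I := by
        push_cast
        ring
      simp only [hf]
      rw [Real.sinc_of_ne_zero (by positivity), e1, e2, Complex.exp_mul_I, Complex.exp_mul_I]
      push_cast
      rw [Complex.cos_neg, Complex.sin_neg]
      field_simp
      ring
  · rw [Set.disjoint_left]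
    intro s h1 h2
    linarith [h1.1, h2.2]
  · exact measurableSet_Ioo
  · exact ((intervalIntegrable_iff_integrableOn_Ioo_of_le hR.le).1 hi1)
  · exact ((intervalIntegrable_iff_integrableOn_Ioo_of_le (by linarith)).1 hi2)

/-- **Logarithmic blow-up of the bi-parameter kernel integral (inequality (1.6)).**
There are constants `c > 0`, `C ≥ 0` such that for every `N ≥ 100` the iterated
principal-value integral
`A(N) = ∫_{−N/10}^{N/10} (1/t) (lim_{δ→0⁺} ∫_{δ<|s|<N/10} e^{2ist} ds/s) dt`
satisfies `|A(N)| ≥ c log N − C`. -/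
theorem log_blowup_biparameter_kernel :
    ∃ c C : ℝ, 0 < c ∧ 0 ≤ C ∧ ∀ N : ℝ, 100 ≤ N →
      ∃ g : ℝ → ℂ,
        (∀ t : ℝ, Tendsto
            (fun δ : ℝ =>
              ∫ s in {s : ℝ | δ < |s| ∧ |s| < N/10},
                Complex.exp (2 * Complex.I * (s:ℂ) * (t:ℂ)) * (1/(s:ℂ)))
            (nhdsWithin 0 (Set.Ioi 0)) (nhds (g t))) ∧
        IntegrableOn (fun t : ℝ => (1/(t:ℂ)) * g t) (Set.Icc (-(N/10)) (N/10)) volume ∧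
        c * Real.log N - C ≤ ‖∫ t in Set.Icc (-(N/10)) (N/10), (1/(t:ℂ)) * g t‖ := by
  refine ⟨1/2, Real.log 10 / 2, by norm_num, by have := Real.log_nonneg (x := 10) (by norm_num); linarith, ?_⟩
  intro N hN
  have hR : 1 ≤ N / 10 := by linarith
  have hae : (fun t : ℝ => (1/(t:ℂ)) * (4 * Complex.I * t * (hh (N/10) t : ℂ)))
      =ᵐ[volume.restrict (Icc (-(N/10)) (N/10))]
      fun t : ℝ => 4 * Complex.I * (hh (N/10) t : ℂ) := by
    apply ae_restrict_of_ae
    have : ∀ᵐ t : ℝ, t ≠ 0 := by simp [ae_iff]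
    filter_upwards [this] with t ht
    have ht1 : (t:ℂ) ≠ 0 := by exact_mod_cast ht
    field_simp
  refine ⟨fun t => 4 * Complex.I * t * (hh (N/10) t : ℂ), ?_, ?_, ?_⟩
  · intro t
    have hcs : Continuous fun s : ℝ => Real.sinc (2 * s * t) := by
      have := Real.continuous_sinc
      fun_prop
    have hcont : Continuous fun δ : ℝ => ∫ s in δ..(N/10), Real.sinc (2 * s * t) := by
      have := intervalIntegral.continuous_primitive (fun a b => hcs.intervalIntegrable a b) (N/10)
        (μ := volume)
      simp_rw [intervalIntegral.integral_symm (N/10)]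
      exact this.neg
    have hlim : Tendsto (fun δ : ℝ => 4 * Complex.I * t *
        ((∫ s in δ..(N/10), Real.sinc (2 * s * t) : ℝ) : ℂ)) (nhdsWithin 0 (Set.Ioi 0))
        (nhds (4 * Complex.I * t * (hh (N/10) t : ℂ))) := by
      have : Continuous fun δ : ℝ => 4 * Complex.I * t *
        ((∫ s in δ..(N/10), Real.sinc (2 * s * t) : ℝ) : ℂ) :=
        continuous_const.mul (Complex.continuous_ofReal.comp hcont)
      exact (this.tendsto 0).mono_left nhdsWithin_le_nhds
    refine hlim.congr' ?_
    have hmem : Ioo (0:ℝ) (N/10) ∈ nhdsWithin (0:ℝ) (Ioi 0) := Ioo_mem_nhdsGT (by linarith)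
    filter_upwards [hmem] with δ hδ
    exact (inner_eq hδ.1 hδ.2).symm
  · refine IntegrableOn.congr_fun_ae ?_ hae.symm
    apply ContinuousOn.integrableOn_Icc
    exact (continuous_const.mul (Complex.continuous_ofReal.comp (hh_cont _))).continuousOn
  · rw [integral_congr_ae hae, integral_const_mul, integral_complex_ofReal, norm_mul]
    have h1 := hh_int_lower hR
    have h2 : ‖(4 * Complex.I : ℂ)‖ = 4 := by simp
    rw [h2, Complex.norm_real]
    have h3 := (le_abs_self _).trans' h1
    rw [Real.log_div (by linarith) (by norm_num)] at h3
    rw [Real.norm_eq_abs]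
    linarith
end
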